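/- The offset array determines a valid partition uniquely: if two valid partitions f and g of the same K trees among the same P processes have identical offset arrays, then f(p) = g(p) for every process p. -/

import Mathlib

/-!
In a valid partition the trees held by the processes `r < p` form an initial segment
`{0, …, m - 1}`, because the processes hold trees in increasing order and every tree is held
(`exists_isFrontier`). The first tree of a nonempty process `p` is then either `m`, when it is new,
or `m - 1`, when it is shared with a smaller rank; in both cases, and also when `p` is empty,
the offset entry is `m` or `-m` (`offset_cases`). So `m = |O[p]|`, while the sign of `O[p]` tells
where `f p` starts. As `f p` ends where the segment of `p + 1` ends, this expresses `f p` through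
`O[p]` and `O[p + 1]` alone (`eq_Ico_offset`).
-/

open Classical

/-- A partition of the `K` trees `{0, …, K-1}` among the `P` processes `{0, …, P-1}`:
each process `p` gets a finite set `f p ⊆ {0, …, K-1}` of trees, the union of all
the `f p` is `{0, …, K-1}`, and non-processes (`p ≥ P`) carry no trees. -/
def IsPartition (K P : ℕ) (f : ℕ → Finset ℕ) : Prop :=
  (∀ p, f p ⊆ Finset.range K) ∧
  (∀ p, P ≤ p → f p = ∅) ∧
  (Finset.range P).biUnion f = Finset.range K

/-- A valid partition: a partition such that (i) each nonempty `f p` is a consecutive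
range `{k_p, …, K_p}`, (ii) for `p < q` (both nonempty) `K_p ≤ k_q`, and (iii) for
`p ≠ q` the overlap `f p ∩ f q` is contained in `{k_p, K_p}`. -/
def IsValid (K P : ℕ) (f : ℕ → Finset ℕ) : Prop :=
  IsPartition K P f ∧
  (∀ p (h : (f p).Nonempty), f p = Finset.Icc ((f p).min' h) ((f p).max' h)) ∧
  (∀ p q, p < q → ∀ (hp : (f p).Nonempty) (hq : (f q).Nonempty),
      (f p).max' hp ≤ (f q).min' hq) ∧
  (∀ p q, p ≠ q → ∀ (hp : (f p).Nonempty),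
      f p ∩ f q ⊆ {(f p).min' hp, (f p).max' hp})

/-- The extended first tree index `k_p` (an integer): `min (f p)` if `f p` is nonempty;
otherwise `K_q + 1` for the maximal `q < p` with `f q` nonempty, or `0` if there is no
such `q`. -/
noncomputable def kExt (f : ℕ → Finset ℕ) (p : ℕ) : ℤ :=
  if h : (f p).Nonempty then ((f p).min' h : ℤ)
  else if hQ : ((Finset.range p).filter fun q => (f q).Nonempty).Nonempty then
    have hq : (f (((Finset.range p).filter fun q => (f q).Nonempty).max' hQ)).Nonempty :=
      (Finset.mem_filter.mp (Finset.max'_mem _ hQ)).2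
    ((f (((Finset.range p).filter fun q => (f q).Nonempty).max' hQ)).max' hq : ℤ) + 1
  else 0

/-- The extended last tree index `K_p` (an integer): `max (f p)` if `f p` is nonempty;
otherwise `K_q` for the maximal `q < p` with `f q` nonempty, or `-1` if there is no
such `q`. -/
noncomputable def KExt (f : ℕ → Finset ℕ) (p : ℕ) : ℤ :=
  if h : (f p).Nonempty then ((f p).max' h : ℤ)
  else if hQ : ((Finset.range p).filter fun q => (f q).Nonempty).Nonempty then
    have hq : (f (((Finset.range p).filter fun q => (f q).Nonempty).max' hQ)).Nonempty :=
      (Finset.mem_filter.mp (Finset.max'_mem _ hQ)).2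
    ((f (((Finset.range p).filter fun q => (f q).Nonempty).max' hQ)).max' hq : ℤ)
  else -1

/-- The offset array `O` of a (valid) partition `f`, of length `P + 1`:
`O[P] = K`, and for `p < P`, `O[p] = k_p` if `f p = ∅` or the first local tree `k_p`
of `p` is not a local tree of any smaller rank, and `O[p] = -k_p - 1` otherwise. -/
noncomputable def offset (K P : ℕ) (f : ℕ → Finset ℕ) (p : ℕ) : ℤ :=
  if p = P then (K : ℤ)
  else if ∀ (h : (f p).Nonempty), ∀ r < p, (f p).min' h ∉ f r then kExt f p
  else -(kExt f p) - 1

/-- The sending paradigm: given the old partition `f`, the process that sends tree `k`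
to process `q` is `q` itself if `k` is already a local tree of `q`, and otherwise
the minimal process `p` with `k ∈ f p`. -/
noncomputable def sender (f : ℕ → Finset ℕ) (q k : ℕ) : ℕ :=
  if k ∈ f q then q else sInf {p | k ∈ f p}

/-- `S_p`: the set of processes `q` such that `p` is the sender of some tree
`k ∈ f' q` (where `f` is the old and `f'` the new partition). -/
def SendSet (f f' : ℕ → Finset ℕ) (p : ℕ) : Set ℕ :=
  {q | ∃ k ∈ f' q, sender f q k = p}

/-- `R_p`: the set of processes `q` such that `q` is the sender of some tree
`k ∈ f' p` (where `f` is the old and `f'` the new partition). -/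
def RecvSet (f f' : ℕ → Finset ℕ) (p : ℕ) : Set ℕ :=
  {q | ∃ k ∈ f' p, sender f p k = q}

/-- `m` is the number of trees held before `p`: the trees of the processes `r < p` are exactly
`0, …, m - 1`. -/
def IsFrontier (f : ℕ → Finset ℕ) (p m : ℕ) : Prop :=
  ∀ x, x < m ↔ ∃ r < p, x ∈ f r

section

variable {K P : ℕ} {f : ℕ → Finset ℕ}

theorem IsValid.le_of_lt (hf : IsValid K P f) {r s x y : ℕ} (hrs : r < s)
    (hx : x ∈ f r) (hy : y ∈ f s) : x ≤ y :=
  ((f r).le_max' x hx).trans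
    ((hf.2.2.1 r s hrs ⟨x, hx⟩ ⟨y, hy⟩).trans ((f s).min'_le y hy))

theorem IsValid.exists_mem (hf : IsValid K P f) {x : ℕ} (hx : x < K) : ∃ s < P, x ∈ f s := by
  have h : x ∈ (Finset.range P).biUnion f := by
    rw [hf.1.2.2]
    exact Finset.mem_range.2 hx
  simpa using h

theorem IsValid.lt_of_mem (hf : IsValid K P f) {p x : ℕ} (hx : x ∈ f p) : x < K :=
  Finset.mem_range.1 (hf.1.1 p hx)

/-- Every tree below a tree held before `p` is held before `p` too: a process from `p` on holds
no tree smaller than those of its predecessors. -/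
theorem exists_isFrontier (hf : IsValid K P f) (p : ℕ) : ∃ m, IsFrontier f p m := by
  have hex : ∃ m, ¬ ∃ r < p, m ∈ f r :=
    ⟨K, fun ⟨r, _, h⟩ => lt_irrefl _ (hf.lt_of_mem h)⟩
  obtain ⟨m, hspec, hfind⟩ : ∃ m, (¬ ∃ r < p, m ∈ f r) ∧ ∀ x < m, ∃ r < p, x ∈ f r :=
    ⟨Nat.find hex, Nat.find_spec hex, fun x h => not_not.1 (Nat.find_min hex h)⟩
  refine ⟨m, fun x => ⟨hfind x, ?_⟩⟩
  rintro ⟨r, hr, hx⟩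
  by_contra! hle
  obtain ⟨s, -, hs⟩ := hf.exists_mem (hle.trans_lt (hf.lt_of_mem hx))
  have hps : p ≤ s := by
    by_contra! hsp
    exact hspec ⟨s, hsp, hs⟩
  have := hf.le_of_lt (hr.trans_le hps) hx hs
  have hmx : m = x := le_antisymm hle this
  exact hspec ⟨r, hr, hmx ▸ hx⟩

theorem IsFrontier.kExt_eq (hf : IsValid K P f) {p m : ℕ} (hm : IsFrontier f p m)
    (hp : ¬ (f p).Nonempty) : kExt f p = m := by
  unfold kExt
  rw [dif_neg hp]
  split_ifs with hQ
  · have hmem := Finset.max'_mem _ hQ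
    have hle := (Finset.isGreatest_max' _ hQ).2
    generalize_proofs h2
    generalize ((Finset.range p).filter fun q => (f q).Nonempty).max' hQ = q at *
    obtain ⟨hqp, hq⟩ := Finset.mem_filter.1 hmem
    rw [Finset.mem_range] at hqp
    have hlt : (f q).max' h2 < m := (hm _).2 ⟨q, hqp, Finset.max'_mem _ _⟩
    -- the last tree before `p` belongs to some `r ≤ q`, hence is at most the last tree of `q`
    obtain ⟨r, hr, hrm⟩ := (hm (m - 1)).1 (by omega)
    have hrq : r ≤ q := hle (Finset.mem_coe.2 <| Finset.mem_filter.2 ⟨Finset.mem_range.2 hr, ⟨_, hrm⟩⟩)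
    have : m - 1 ≤ (f q).max' h2 := by
      rcases hrq.eq_or_lt with rfl | h
      · exact Finset.le_max' _ _ hrm
      · exact hf.le_of_lt h hrm (Finset.max'_mem _ _)
    dsimp only
    omega
  · rcases Nat.eq_zero_or_pos m with rfl | h
    · rfl
    · obtain ⟨r, hr, hrm⟩ := (hm 0).1 h
      exact absurd ⟨r, Finset.mem_filter.2 ⟨Finset.mem_range.2 hr, ⟨_, hrm⟩⟩⟩ hQ

/-- The two shapes of the offset entry of `p < P`, in terms of the number `m` of trees held before
`p`: either `p` is empty or starts with the new tree `m`, or it starts with the shared tree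
`m - 1`. -/
theorem offset_cases (hf : IsValid K P f) {p m : ℕ} (hpP : p < P) (hm : IsFrontier f p m) :
    (offset K P f p = m ∧ (∀ h : (f p).Nonempty, (f p).min' h = m)) ∨
    (offset K P f p = -m ∧ ∃ h : (f p).Nonempty, (f p).min' h + 1 = m) := by
  unfold offset
  rw [if_neg hpP.ne]
  by_cases hp : (f p).Nonempty
  · have hk : kExt f p = (f p).min' hp := by
      unfold kExt
      rw [dif_pos hp]
    have hmin := Finset.min'_mem _ hp
    split_ifs with hnew
    · left
      have hle : m ≤ (f p).min' hp := by
        by_contra! hlt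
        obtain ⟨r, hr, hrm⟩ := (hm _).1 hlt
        exact hnew hp r hr hrm
      -- a gap between `m` and the first tree of `p` would leave tree `m` without a process
      have hge : (f p).min' hp ≤ m := by
        by_contra! hlt
        obtain ⟨s, -, hs⟩ := hf.exists_mem (hlt.trans (hf.lt_of_mem hmin))
        rcases lt_trichotomy s p with h | rfl | h
        · exact lt_irrefl _ ((hm m).2 ⟨s, h, hs⟩)
        · exact absurd (Finset.min'_le _ _ hs) (by omega)
        · exact absurd (hf.le_of_lt h hmin hs) (by omega)
      exact ⟨by rw [hk]; omega, fun _ => le_antisymm hge hle⟩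
    · right
      push Not at hnew
      obtain ⟨_, r, hr, hrm⟩ := hnew
      have hlt := (hm _).2 ⟨r, hr, hrm⟩
      obtain ⟨s, hs, hsm⟩ := (hm (m - 1)).1 (by omega)
      have := hf.le_of_lt hs hsm hmin
      exact ⟨by rw [hk]; omega, hp, by omega⟩
  · rw [if_pos fun h => absurd h hp]
    exact Or.inl ⟨hm.kExt_eq hf hp, fun h => absurd h hp⟩

theorem natAbs_offset (hf : IsValid K P f) {p m : ℕ} (hpP : p ≤ P) (hm : IsFrontier f p m) :
    (offset K P f p).natAbs = m := by
  rcases hpP.eq_or_lt with rfl | h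
  · have hK : IsFrontier f p K := fun x =>
      ⟨hf.exists_mem, fun ⟨_, _, h⟩ => hf.lt_of_mem h⟩
    have hmK : ∀ x, x < m ↔ x < K := fun x => (hm x).trans (hK x).symm
    have h1 := hmK m
    have h2 := hmK K
    simp only [offset, if_true]
    omega
  · rcases offset_cases hf h hm with h | h <;> omega

/-- Reconstruction of `f p` from two consecutive offset entries. A negative entry means that the
first tree of `p` is shared, so that `f p` starts one tree earlier. -/
theorem eq_Ico_offset (hf : IsValid K P f) {p : ℕ} (hpP : p < P) :
    f p = Finset.Ico
      (if offset K P f p < 0 then (offset K P f p).natAbs - 1 else (offset K P f p).natAbs)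
      (offset K P f (p + 1)).natAbs := by
  obtain ⟨m, hm⟩ := exists_isFrontier hf p
  obtain ⟨n, hn⟩ := exists_isFrontier hf (p + 1)
  rw [natAbs_offset hf hpP.le hm, natAbs_offset hf hpP hn]
  by_cases hp : (f p).Nonempty
  · have hstart : (if offset K P f p < 0 then m - 1 else m) = (f p).min' hp := by
      rcases offset_cases hf hpP hm with ⟨ho, h⟩ | ⟨ho, _, h⟩
      · rw [if_neg (by omega), h hp]
      · rw [if_pos (by omega)]
        omega
    have hend : n = (f p).max' hp + 1 := by
      have hlt := (hn _).2 ⟨p, p.lt_succ_self, Finset.max'_mem _ hp⟩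
      obtain ⟨r, hr, hrn⟩ := (hn (n - 1)).1 (by omega)
      have : n - 1 ≤ (f p).max' hp := by
        rcases (Nat.lt_succ_iff.1 hr).eq_or_lt with rfl | h
        · exact Finset.le_max' _ _ hrn
        · exact hf.le_of_lt h hrn (Finset.max'_mem _ _)
      omega
    rw [hstart, hend]
    conv_lhs => rw [hf.2.1 p hp]
    ext x
    simp only [Finset.mem_Icc, Finset.mem_Ico]
    omega
  · have ho : ¬ offset K P f p < 0 := by
      rcases offset_cases hf hpP hm with ⟨ho, -⟩ | ⟨-, h, -⟩
      · omega
      · exact absurd h hp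
    rw [if_neg ho]
    have hnm : n ≤ m := by
      by_contra! hlt
      obtain ⟨r, hr, hrm⟩ := (hn m).1 hlt
      rcases (Nat.lt_succ_iff.1 hr).eq_or_lt with rfl | h
      · exact hp ⟨_, hrm⟩
      · exact lt_irrefl _ ((hm m).2 ⟨r, h, hrm⟩)
    rw [Finset.Ico_eq_empty (by omega), Finset.not_nonempty_iff_eq_empty.1 hp]

end

/-- The offset array determines a valid partition uniquely: if two valid partitions `f`
and `g` of the same `K` trees among the same `P` processes have identical offset
arrays (of length `P + 1`), then `f p = g p` for every process `p`. -/
theorem offset_determines_partition (K P : ℕ) (hK : 1 ≤ K) (hP : 1 ≤ P)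
    (f g : ℕ → Finset ℕ) (hf : IsValid K P f) (hg : IsValid K P g)
    (hO : ∀ p ≤ P, offset K P f p = offset K P g p) :
    ∀ p, f p = g p := by
  intro p
  rcases lt_or_ge p P with h | h
  · rw [eq_Ico_offset hf h, eq_Ico_offset hg h, hO p h.le, hO (p + 1) h]
  · rw [hf.1.2.1 p h, hg.1.2.1 p h]
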